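/- Let L be a finite lattice with join-presentation (J(L), ≤, M). Let j, k ∈ J(L) and let C ∈ M(j) be a minimal join-cover of j with k ∈ C. Then k ∉ cl(↓(C \ {k})), where ↓(C \ {k}) denotes the downward closure of C \ {k} in J(L). -/

import Mathlib

/-- The refinement relation: `A ≪ B` iff every element of `A` is below some element of `B`. -/
def Refines {L : Type*} [Preorder L] (A B : Set L) : Prop :=
  ∀ a ∈ A, ∃ b ∈ B, a ≤ b

/-- An element `j ≠ ⊥` is join-irreducible if `j = a ∨ b` implies `j = a` or `j = b`. -/
def JoinIrr {L : Type*} [Lattice L] [OrderBot L] (j : L) : Prop :=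
  j ≠ ⊥ ∧ ∀ a b : L, j = a ⊔ b → j = a ∨ j = b

/-- `C` is a minimal join-cover of `a`: `C` is a join-cover of `a` (`a ≤ ⋁C`), `C` is an
`≤`-antichain, and every `≤`-antichain `D` with `a ≤ ⋁D` and `D ≪ C` equals `C`. -/
def MinJoinCover {L : Type*} [CompleteLattice L] (a : L) (C : Set L) : Prop :=
  a ≤ sSup C ∧ IsAntichain (· ≤ ·) C ∧
    ∀ D : Set L, IsAntichain (· ≤ ·) D → a ≤ sSup D → Refines D C → D = C

/-- The closure map of the join-presentation of `L`: for a subset `S` of `J(L)`,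
`cl(S) := {j ∈ J(L) | ∃ C ∈ M(j), C ⊆ S}` (join-irreducibles are represented as
elements of `L` satisfying `JoinIrr`). -/
def clJ {L : Type*} [CompleteLattice L] (S : Set L) : Set L :=
  {j : L | JoinIrr j ∧ ∃ C : Set L, MinJoinCover j C ∧ C ⊆ S}

namespace MinJoinCover

variable {L : Type*} [CompleteLattice L] {a k : L} {C D : Set L}

theorem eq_of_subset_of_le_sSup (hC : MinJoinCover a C) (hDC : D ⊆ C) (ha : a ≤ sSup D) :
    D = C :=
  hC.2.2 D (hC.2.1.subset hDC) ha fun d hd => ⟨d, hDC hd, le_rfl⟩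

theorem not_le_sSup_sdiff_singleton (hC : MinJoinCover a C) (hk : k ∈ C) :
    ¬k ≤ sSup (C \ {k}) := by
  intro hle
  have sSup_eq : sSup C = sSup (C \ {k}) := calc
    sSup C = sSup (insert k (C \ {k})) := by rw [Set.insert_sdiff_self_of_mem hk]
    _ = k ⊔ sSup (C \ {k}) := sSup_insert
    _ = sSup (C \ {k}) := sup_eq_right.mpr hle
  have sdiff_eq : C \ {k} = C :=
    hC.eq_of_subset_of_le_sSup Set.sdiff_subset (hC.1.trans_eq sSup_eq)
  exact (sdiff_eq.ge hk).2 rfl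

end MinJoinCover

theorem le_sSup_of_mem_clJ {L : Type*} [CompleteLattice L] {S : Set L} {j : L}
    (hj : j ∈ clJ S) : j ≤ sSup S := by
  obtain ⟨_, C, hC, hCS⟩ := hj
  exact hC.1.trans (sSup_le_sSup hCS)

theorem not_mem_clJ_downset_diff_general {L : Type*} [CompleteLattice L] {a k : L} {C : Set L}
    (hC : MinJoinCover a C) (hkC : k ∈ C) :
    k ∉ clJ {x : L | JoinIrr x ∧ ∃ c ∈ C \ {k}, x ≤ c} := by
  intro hk
  have sSup_downset_le : sSup {x : L | JoinIrr x ∧ ∃ c ∈ C \ {k}, x ≤ c} ≤ sSup (C \ {k}) :=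
    sSup_le_sSup_of_isCofinalFor fun _ hx => hx.2
  exact hC.not_le_sSup_sdiff_singleton hkC ((le_sSup_of_mem_clJ hk).trans sSup_downset_le)

/-- If `C` is a minimal join-cover of `j` and `k ∈ C`, then
`k ∉ cl(↓(C \ {k}))`, where `↓(C \ {k})` is the downward closure of `C \ {k}`
within the poset `J(L)` of join-irreducibles. -/
theorem not_mem_clJ_downset_diff {L : Type*} [CompleteLattice L] [Fintype L]
    (j k : L) (hj : JoinIrr j) (hk : JoinIrr k)
    (C : Set L) (hC : MinJoinCover j C) (hkC : k ∈ C) :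
    k ∉ clJ {x : L | JoinIrr x ∧ ∃ c ∈ C \ {k}, x ≤ c} :=
  not_mem_clJ_downset_diff_general hC hkC
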